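/- Soundness of rule L1: Let K be a statistical ALC knowledge base containing the conditional (A|B)[ℓ,1], where A, B are ALC concepts, and suppose K ⊨_l (B|⊤)[m,1] for a rational m with 0 ≤ m ≤ 1. Then K ⊨_l (A|⊤)[ℓ·m,1]. -/

import Mathlib

open scoped Classical

/-- ALC concepts over concept names and role names (both drawn from ℕ,
regarded as disjoint name spaces). -/
inductive Cpt : Type where
  | top : Cpt
  | atom : ℕ → Cpt
  | neg : Cpt → Cpt
  | inter : Cpt → Cpt → Cpt
  | ex : ℕ → Cpt → Cpt
deriving DecidableEq

/-- A finite interpretation with domain drawn from the type `α`. -/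
structure Interp (α : Type) where
  dom : Finset α
  dom_nonempty : dom.Nonempty
  conc : ℕ → Finset α
  conc_sub : ∀ a, conc a ⊆ dom
  role : ℕ → Finset (α × α)
  role_sub : ∀ r, role r ⊆ dom ×ˢ dom

/-- The extension `C^I` of a concept. -/
noncomputable def Interp.ext {α : Type} (I : Interp α) : Cpt → Finset α
  | .top => I.dom
  | .atom a => I.conc a
  | .neg c => I.dom \ I.ext c
  | .inter c d => I.ext c ∩ I.ext d
  | .ex r c => I.dom.filter (fun d => ∃ e ∈ I.ext c, (d, e) ∈ I.role r)

/-- `[C]^I`, the cardinality of the extension of `C`. -/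
noncomputable def cardC {α : Type} (I : Interp α) (c : Cpt) : ℕ := (I.ext c).card

/-- A probabilistic conditional `(C|D)[l,u]`. -/
structure Cond : Type where
  C : Cpt
  D : Cpt
  l : ℚ
  u : ℚ
deriving DecidableEq

/-- `I ⊨ (C|D)[l,u]` iff `[D]^I = 0` or `l ≤ [C ⊓ D]^I/[D]^I ≤ u`. -/
def satCond {α : Type} (I : Interp α) (κ : Cond) : Prop :=
  cardC I κ.D = 0 ∨
    (κ.l ≤ (cardC I (.inter κ.C κ.D) : ℚ) / (cardC I κ.D : ℚ) ∧
     (cardC I (.inter κ.C κ.D) : ℚ) / (cardC I κ.D : ℚ) ≤ κ.u)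

/-- Finite interpretations (with domain drawn from the countable set ℕ). -/
abbrev FInterp := Interp ℕ

/-- The models of a knowledge base (finite set of conditionals). -/
def Models (K : Finset Cond) : Set FInterp := {I | ∀ κ ∈ K, satCond I κ}

/-- l-entailment: every model of `K` satisfies the conditional. -/
def entailsL (K : Finset Cond) (κ : Cond) : Prop := ∀ I ∈ Models K, satCond I κ

section Interpretation

variable {α : Type} (I : Interp α)

theorem Interp.ext_subset_dom : ∀ C : Cpt, I.ext C ⊆ I.dom
  | .top => Finset.Subset.rfl
  | .atom a => I.conc_sub a
  | .neg _ => Finset.sdiff_subset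
  | .inter C _ => Finset.inter_subset_left.trans (Interp.ext_subset_dom C)
  | .ex _ _ => Finset.filter_subset _ _

theorem cardC_top_pos : 0 < cardC I .top :=
  Finset.card_pos.mpr I.dom_nonempty

theorem cardC_le_cardC_top (C : Cpt) : cardC I C ≤ cardC I .top :=
  Finset.card_le_card (I.ext_subset_dom C)

theorem cardC_inter_le_left (C D : Cpt) : cardC I (.inter C D) ≤ cardC I C :=
  Finset.card_le_card Finset.inter_subset_left

theorem cardC_inter_top (C : Cpt) : cardC I (.inter C .top) = cardC I C :=
  congrArg Finset.card (Finset.inter_eq_left.mpr (I.ext_subset_dom C))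

end Interpretation

section Conditional

variable {α : Type} {I : Interp α}

theorem satCond.mul_cardC_le {C D : Cpt} {l u : ℚ} (h : satCond I ⟨C, D, l, u⟩) :
    l * cardC I D ≤ cardC I (.inter C D) := by
  rcases h with (hD : cardC I D = 0) | ⟨hl, -⟩
  · simp [hD]
  · exact mul_le_of_le_div₀ (Nat.cast_nonneg _) (Nat.cast_nonneg _) hl

theorem satCond_top_one_iff {C : Cpt} {l : ℚ} :
    satCond I ⟨C, .top, l, 1⟩ ↔ l * cardC I .top ≤ cardC I C := by
  have top_pos : (0 : ℚ) < cardC I .top := Nat.cast_pos.mpr (cardC_top_pos I)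
  have le_top : (cardC I C : ℚ) ≤ cardC I .top := Nat.cast_le.mpr (cardC_le_cardC_top I C)
  simp only [satCond, cardC_inter_top, (cardC_top_pos I).ne', false_or, le_div_iff₀ top_pos,
    div_le_one₀ top_pos, le_top, and_true]

theorem rule_L1_sound_general {A B : Cpt} {l u m v : ℚ} (hl : 0 ≤ l)
    (hAB : satCond I ⟨A, B, l, u⟩) (hB : satCond I ⟨B, .top, m, v⟩) :
    satCond I ⟨A, .top, l * m, 1⟩ := by
  have le_B : m * cardC I .top ≤ cardC I B := by
    simpa only [cardC_inter_top] using hB.mul_cardC_le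
  refine satCond_top_one_iff.mpr ?_
  calc l * m * cardC I .top = l * (m * cardC I .top) := mul_assoc _ _ _
    _ ≤ l * cardC I B := mul_le_mul_of_nonneg_left le_B hl
    _ ≤ cardC I (.inter A B) := hAB.mul_cardC_le
    _ ≤ cardC I A := Nat.cast_le.mpr (cardC_inter_le_left I A B)

end Conditional

/-- Soundness of rule L1. -/
theorem rule_L1_sound (K : Finset Cond) (A B : Cpt) (l m : ℚ)
    (hl0 : 0 ≤ l) (hl1 : l ≤ 1) (hm0 : 0 ≤ m) (hm1 : m ≤ 1)
    (hmem : (⟨A, B, l, 1⟩ : Cond) ∈ K)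
    (hent : entailsL K ⟨B, .top, m, 1⟩) :
    entailsL K ⟨A, .top, l * m, 1⟩ :=
  fun I hI ↦ rule_L1_sound_general hl0 (hI _ hmem) (hent I hI)
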